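/- arXiv:2310.16595 — 2 statements merged into one kernel-verified Lean document; each statement's English description precedes it below -/
import Mathlib

section
/- For every level t there exist n ≥ 1 and levels u₁, …, uₙ, each generated by the max-free grammar u ::= 0 | s(u) | x | imax(u, u), such that for every valuation σ, ⟦t⟧σ = max(⟦u₁⟧σ, …, ⟦uₙ⟧σ). -/
/-- The impredicative maximum on natural numbers. -/
def imaxN : ℕ → ℕ → ℕ
  | _, 0 => 0
  | i, (j+1) => max i (j+1)

/-- Levels: t ::= 0 | s(t) | x | max(t,t) | imax(t,t). -/
inductive Lvl where
  | zero : Lvl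
  | succ : Lvl → Lvl
  | var : ℕ → Lvl
  | lmax : Lvl → Lvl → Lvl
  | limax : Lvl → Lvl → Lvl

/-- Value of a level under a valuation. -/
def evalL (σ : ℕ → ℕ) : Lvl → ℕ
  | .zero => 0
  | .succ t => evalL σ t + 1
  | .var x => σ x
  | .lmax u v => max (evalL σ u) (evalL σ v)
  | .limax u v => imaxN (evalL σ u) (evalL σ v)

/-- Maximum of a list of naturals, 0 for the empty list. -/
def listMax (l : List ℕ) : ℕ := l.foldr max 0

/-- The max-free grammar u ::= 0 | s(u) | x | imax(u,u). -/
inductive MaxFree : Lvl → Prop where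
  | zero : MaxFree .zero
  | succ {t : Lvl} : MaxFree t → MaxFree (.succ t)
  | var (x : ℕ) : MaxFree (.var x)
  | imax {u v : Lvl} : MaxFree u → MaxFree v → MaxFree (.limax u v)

theorem listMax_le_iff (l : List Lvl) (f : Lvl → ℕ) (n : ℕ) :
    listMax (l.map f) ≤ n ↔ ∀ u ∈ l, f u ≤ n := by
  induction l with
  | nil => simp [listMax]
  | cons a l ih =>
    have : listMax ((a :: l).map f) = max (f a) (listMax (l.map f)) := rfl
    rw [this, max_le_iff, ih]
    simp

theorem imaxN_le_iff (i j n : ℕ) : imaxN i j ≤ n ↔ j ≤ 0 ∨ (i ≤ n ∧ j ≤ n) := by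
  cases j <;> simp [imaxN]

theorem level_as_max_of_maxfree (t : Lvl) :
    ∃ l : List Lvl, l ≠ [] ∧ (∀ u ∈ l, MaxFree u) ∧
      ∀ σ : ℕ → ℕ, evalL σ t = listMax (l.map (evalL σ)) := by
  induction t with
  | zero => exact ⟨[.zero], by simp, by simpa using MaxFree.zero, fun σ => by simp [listMax]⟩
  | var x => exact ⟨[.var x], by simp, by simpa using MaxFree.var x, fun σ => by simp [listMax]⟩
  | succ t ih =>
    obtain ⟨l, hl, hm, he⟩ := ih
    refine ⟨l.map .succ, by simpa using hl, ?_, fun σ => ?_⟩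
    · intro u hu
      obtain ⟨v, hv, rfl⟩ := List.mem_map.1 hu
      exact .succ (hm v hv)
    · refine eq_of_forall_ge_iff fun n => ?_
      obtain ⟨a, ha⟩ := List.exists_mem_of_ne_nil l hl
      rw [listMax_le_iff, evalL, he]
      simp only [List.forall_mem_map, evalL]
      cases n with
      | zero =>
        constructor
        · intro h; omega
        · intro h; have := h a ha; omega
      | succ n => simp only [Nat.add_le_add_iff_right, listMax_le_iff]
  | lmax u v ihu ihv =>
    obtain ⟨l, hl, hm, he⟩ := ihu
    obtain ⟨l', hl', hm', he'⟩ := ihv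
    refine ⟨l ++ l', by simp [hl], ?_, fun σ => ?_⟩
    · intro w hw
      exact (List.mem_append.1 hw).elim (hm w) (hm' w)
    · refine eq_of_forall_ge_iff fun n => ?_
      rw [listMax_le_iff, evalL, he, he', max_le_iff, listMax_le_iff, listMax_le_iff,
        List.forall_mem_append]
  | limax u v ihu ihv =>
    obtain ⟨l, hl, hm, he⟩ := ihu
    obtain ⟨l', hl', hm', he'⟩ := ihv
    obtain ⟨a, ha⟩ := List.exists_mem_of_ne_nil l hl
    obtain ⟨b, hb⟩ := List.exists_mem_of_ne_nil l' hl'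
    have key : ∀ w, w ∈ l.flatMap (fun x => l'.map (fun y => Lvl.limax x y)) ↔
        ∃ x ∈ l, ∃ y ∈ l', Lvl.limax x y = w := by
      intro w; simp [List.mem_flatMap, List.mem_map]
    refine ⟨l.flatMap (fun x => l'.map (fun y => Lvl.limax x y)), ?_, ?_, fun σ => ?_⟩
    · exact List.ne_nil_of_mem ((key _).2 ⟨a, ha, b, hb, rfl⟩)
    · intro w hw
      obtain ⟨x, hx, y, hy, rfl⟩ := (key w).1 hw
      exact .imax (hm x hx) (hm' y hy)
    · refine eq_of_forall_ge_iff fun n => ?_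
      rw [listMax_le_iff, evalL, he, he', imaxN_le_iff, listMax_le_iff, listMax_le_iff,
        listMax_le_iff]
      constructor
      · intro h w hw
        obtain ⟨x, hx, y, hy, rfl⟩ := (key w).1 hw
        rw [evalL, imaxN_le_iff]
        exact h.imp (fun h => h y hy) (fun h => ⟨h.1 x hx, h.2 y hy⟩)
      · intro h
        have h' : ∀ x ∈ l, ∀ y ∈ l', evalL σ y ≤ 0 ∨ (evalL σ x ≤ n ∧ evalL σ y ≤ n) := by
          intro x hx y hy
          have := h _ ((key _).2 ⟨x, hx, y, hy, rfl⟩)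
          rwa [evalL, imaxN_le_iff] at this
        by_cases hz : ∀ y ∈ l', evalL σ y ≤ 0
        · exact .inl hz
        · right
          push Not at hz
          obtain ⟨y, hy, hy0⟩ := hz
          refine ⟨fun x hx => ?_, fun z hz => ?_⟩
          · have := h' x hx y hy; omega
          · have := h' a ha z hz; omega
end

section
/- For every level t there exist n ≥ 1 and levels u₁, …, uₙ, each generated by the restricted grammar u ::= sᵏ(x) | sᵏ(0) | imax(u, x) (where k ∈ ℕ and x is a variable, so every second argument of imax is a variable and successors occur only at the innermost position), such that for every valuation σ, ⟦t⟧σ = max(⟦u₁⟧σ, …, ⟦uₙ⟧σ). -/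
/-- The restricted grammar u ::= sᵏ(x) | sᵏ(0) | imax(u, x). -/
inductive Restricted : Lvl → Prop where
  | var (k x : ℕ) : Restricted (Lvl.succ^[k] (Lvl.var x))
  | zero (k : ℕ) : Restricted (Lvl.succ^[k] Lvl.zero)
  | imax {u : Lvl} (x : ℕ) : Restricted u → Restricted (.limax u (.var x))


inductive PR : ((ℕ → ℕ) → ℕ) → Prop where
  | base {u : Lvl} : Restricted u → PR (fun σ => evalL σ u)
  | mx {f g : (ℕ → ℕ) → ℕ} : PR f → PR g → PR (fun σ => max (f σ) (g σ))

theorem imaxN_def (i j : ℕ) : imaxN i j = if j = 0 then 0 else max i j := by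
  cases j <;> simp [imaxN]

theorem PR.congr' {f g : (ℕ → ℕ) → ℕ} (h : PR f) (e : ∀ σ, g σ = f σ) : PR g := by
  have : g = f := funext e
  rwa [this]

theorem evalL_iter (σ : ℕ → ℕ) (k : ℕ) (t : Lvl) :
    evalL σ (Lvl.succ^[k] t) = evalL σ t + k := by
  induction k with
  | zero => rfl
  | succ k ih => rw [Function.iterate_succ_apply', evalL, ih]; rfl

theorem PR.var (k x : ℕ) : PR (fun σ => σ x + k) :=
  (PR.base (Restricted.var k x)).congr' fun σ => by simp [evalL_iter, evalL]

theorem PR.const (k : ℕ) : PR (fun _ => k) :=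
  (PR.base (Restricted.zero k)).congr' fun σ => by simp [evalL_iter, evalL]

theorem PR.imaxVar {f : (ℕ → ℕ) → ℕ} (x : ℕ) (h : PR f) : PR (fun σ => imaxN (f σ) (σ x)) := by
  induction h with
  | base hu => exact PR.base (Restricted.imax x hu)
  | mx _ _ h1 h2 =>
    refine (h1.mx h2).congr' fun σ => ?_
    simp only [imaxN_def]
    split_ifs <;> omega

theorem PR.succ {f : (ℕ → ℕ) → ℕ} (h : PR f) : PR (fun σ => f σ + 1) := by
  induction h with
  | base hu =>
    induction hu with
    | var k x =>
      exact (PR.var (k+1) x).congr' fun σ => by simp [evalL_iter, evalL]; omega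
    | zero k =>
      exact (PR.const (k+1)).congr' fun σ => by simp [evalL_iter, evalL]
    | imax x _ ih =>
      refine (((PR.const 1).mx (PR.var 1 x)).mx (ih.imaxVar x)).congr' fun σ => ?_
      simp only [imaxN_def, evalL]
      split_ifs <;> omega
  | mx _ _ h1 h2 => exact (h1.mx h2).congr' fun σ => by beta_reduce; omega

theorem PR.imax {f g : (ℕ → ℕ) → ℕ} (hf : PR f) (h : PR g) : PR (fun σ => imaxN (f σ) (g σ)) := by
  induction h with
  | base hu =>
    cases hu with
    | var k x =>
      rcases k with _ | k
      · exact hf.imaxVar x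
      · refine (hf.mx (PR.var (k+1) x)).congr' fun σ => ?_
        simp only [imaxN_def, evalL_iter, evalL]
        split_ifs <;> first | contradiction | omega
    | zero k =>
      rcases k with _ | k
      · exact PR.const 0
      · refine (hf.mx (PR.const (k+1))).congr' fun σ => ?_
        simp only [imaxN_def, evalL_iter, evalL]
        split_ifs <;> first | contradiction | omega
    | imax x hw =>
      refine ((hf.imaxVar x).mx ((PR.base hw).imaxVar x)).congr' fun σ => ?_
      simp only [imaxN_def, evalL]
      split_ifs <;> omega
  | mx _ _ h1 h2 =>
    refine (h1.mx h2).congr' fun σ => ?_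
    simp only [imaxN_def]
    split_ifs <;> omega

theorem PR.all (t : Lvl) : PR (fun σ => evalL σ t) := by
  induction t with
  | zero => exact PR.const 0
  | succ t ih => exact ih.succ
  | var x => exact PR.var 0 x
  | lmax u v h1 h2 => exact h1.mx h2
  | limax u v h1 h2 => exact h1.imax h2

theorem listMax_append (a b : List ℕ) : listMax (a ++ b) = max (listMax a) (listMax b) := by
  induction a with
  | nil => simp [listMax]
  | cons x a ih =>
    simp only [listMax, List.cons_append, List.foldr_cons] at *
    rw [ih]; omega

theorem PR.list {f : (ℕ → ℕ) → ℕ} (h : PR f) :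
    ∃ l : List Lvl, l ≠ [] ∧ (∀ u ∈ l, Restricted u) ∧
      ∀ σ : ℕ → ℕ, f σ = listMax (l.map (evalL σ)) := by
  induction h with
  | @base u hu => exact ⟨[u], by simp, by simpa using hu, fun σ => by simp [listMax]⟩
  | mx _ _ h1 h2 =>
    obtain ⟨a, a1, a2, a3⟩ := h1
    obtain ⟨b, b1, b2, b3⟩ := h2
    refine ⟨a ++ b, by simp [a1], ?_, fun σ => ?_⟩
    · intro u hu
      rcases List.mem_append.1 hu with h | h
      · exact a2 u h
      · exact b2 u h
    · beta_reduce; rw [List.map_append, listMax_append, a3, b3]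

theorem level_as_max_of_restricted (t : Lvl) :
    ∃ l : List Lvl, l ≠ [] ∧ (∀ u ∈ l, Restricted u) ∧
      ∀ σ : ℕ → ℕ, evalL σ t = listMax (l.map (evalL σ)) :=
  (PR.all t).list
end
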